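/- (Resilient recovery with CSP.) Let H be a real M×n matrix, σ̲ > 0 a constant with ‖Hv‖₂ ≥ σ̲·‖v‖₂ for all v ∈ ℝ^n, and s a natural number. Suppose H satisfies the column space property of order s with parameter β ∈ (0,1): for every w in the column space of H and every index set S ⊆ {1,…,M} with |S| ≤ s, ‖w_S‖₁ ≤ β·‖w_{S^c}‖₁. Let x ∈ ℝ^n, let e ∈ ℝ^M and an index set T ⊆ {1,…,M} with |T| ≤ s satisfy ‖e_{T^c}‖₁ ≤ ε, let y = Hx + e, and let x̂ be a minimizer over z ∈ ℝ^n of ‖y − Hz‖₁. Then ‖x̂ − x‖₂ ≤ 2(1+β)·ε / (σ̲·(1−β)). -/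

import Mathlib

/-!
Let `w = H (x̂ - x)`. Optimality of `x̂` against `z = x` says `‖e - w‖₁ ≤ ‖e‖₁`. Splitting both
sides over `T` and `Tᶜ` and using the triangle inequality gives the cone-type bound
`‖w_{Tᶜ}‖₁ ≤ ‖w_T‖₁ + 2ε`. The column space property bounds `‖w_T‖₁` by `β ‖w_{Tᶜ}‖₁`, hence
`(1 - β) ‖w_{Tᶜ}‖₁ ≤ 2ε` and `‖w‖₁ ≤ (1 + β) ‖w_{Tᶜ}‖₁`. The claim follows from
`σ̲ ‖x̂ - x‖₂ ≤ ‖w‖₂ ≤ ‖w‖₁`.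
-/

lemma sqrt_sum_sq_le_sum_abs {ι : Type*} (S : Finset ι) (w : ι → ℝ) :
    Real.sqrt (∑ i ∈ S, (w i) ^ 2) ≤ ∑ i ∈ S, |w i| := by
  rw [Real.sqrt_le_left (Finset.sum_nonneg fun i _ => abs_nonneg _)]
  simpa only [sq_abs] using
    Finset.sum_sq_le_sq_sum_of_nonneg (s := S) (f := fun i => |w i|) (fun i _ => abs_nonneg _)

/-- Resilient recovery with CSP: If `H` satisfies the column
space property of order `s` with parameter `β ∈ (0,1)` and `‖Hv‖₂ ≥ σ̲‖v‖₂`,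
then the ℓ₁ decoder recovers the state with error at most
`2(1+β)ε/(σ̲(1−β))`. -/
theorem stmt_10 (M n : ℕ) (H : Matrix (Fin M) (Fin n) ℝ)
    (σlow : ℝ) (hσlow : 0 < σlow)
    (hlb : ∀ v : Fin n → ℝ,
      σlow * Real.sqrt (∑ j, (v j) ^ 2) ≤ Real.sqrt (∑ i, (H.mulVec v i) ^ 2))
    (s : ℕ) (β : ℝ) (hβ0 : 0 < β) (hβ1 : β < 1)
    (hcsp : ∀ w : Fin M → ℝ, (∃ x : Fin n → ℝ, w = H.mulVec x) →
      ∀ S : Finset (Fin M), S.card ≤ s →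
        ∑ i ∈ S, |w i| ≤ β * ∑ i ∈ Sᶜ, |w i|)
    (x : Fin n → ℝ) (e : Fin M → ℝ) (T : Finset (Fin M)) (hT : T.card ≤ s)
    (ε : ℝ) (he : ∑ i ∈ Tᶜ, |e i| ≤ ε)
    (y : Fin M → ℝ) (hy : y = H.mulVec x + e)
    (xhat : Fin n → ℝ)
    (hopt : ∀ z : Fin n → ℝ,
      ∑ i, |y i - H.mulVec xhat i| ≤ ∑ i, |y i - H.mulVec z i|) :
    Real.sqrt (∑ j, (xhat j - x j) ^ 2) ≤
      2 * (1 + β) * ε / (σlow * (1 - β)) := by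
  set w : Fin M → ℝ := H.mulVec (xhat - x) with hw
  have hwi : ∀ i, w i = H.mulVec xhat i - H.mulVec x i := fun i => by
    rw [hw, Matrix.mulVec_sub, Pi.sub_apply]
  have hopt' : ∑ i, |e i - w i| ≤ ∑ i, |e i| := by
    convert hopt x using 3 with i _ i _
    · rw [hwi, hy, Pi.add_apply]; ring_nf
    · rw [hy, Pi.add_apply]; ring_nf
  have hT1 : ∑ i ∈ T, |e i| - ∑ i ∈ T, |w i| ≤ ∑ i ∈ T, |e i - w i| := by
    rw [← Finset.sum_sub_distrib]
    exact Finset.sum_le_sum fun i _ => abs_sub_abs_le_abs_sub _ _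
  have hT2 : ∑ i ∈ Tᶜ, |w i| - ∑ i ∈ Tᶜ, |e i| ≤ ∑ i ∈ Tᶜ, |e i - w i| := by
    rw [← Finset.sum_sub_distrib]
    refine Finset.sum_le_sum fun i _ => ?_
    rw [abs_sub_comm]
    exact abs_sub_abs_le_abs_sub _ _
  have hC := hcsp w ⟨xhat - x, rfl⟩ T hT
  have h1 := hlb (xhat - x)
  have h2 := sqrt_sum_sq_le_sum_abs Finset.univ w
  have s1 := Finset.sum_add_sum_compl T fun i => |e i - w i|
  have s2 := Finset.sum_add_sum_compl T fun i => |e i|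
  have s3 := Finset.sum_add_sum_compl T fun i => |w i|
  have hcone : (1 - β) * ∑ i ∈ Tᶜ, |w i| ≤ 2 * ε := by linarith
  have hbound : σlow * Real.sqrt (∑ j, (xhat j - x j) ^ 2) ≤ (1 + β) * ∑ i ∈ Tᶜ, |w i| := by
    simp only [Pi.sub_apply] at h1
    linarith
  rw [le_div_iff₀ (mul_pos hσlow (by linarith))]
  have m1 := mul_le_mul_of_nonneg_right hbound (show 0 ≤ 1 - β by linarith)
  have m2 := mul_le_mul_of_nonneg_left hcone (show 0 ≤ 1 + β by linarith)
  linarith
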